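/- arXiv:2109.02302 — 2 statements merged into one kernel-verified Lean document; each statement's English description precedes it below -/
import Mathlib

section
/- For every finite graph G, there exists n ∈ ℕ and a partition of V(G) into non-empty sets X₁,…,Xₙ such that (1) for every i, the induced subgraph G[Xᵢ] is bipartite and connected, and (2) for every i < j, either there are no edges of G between Xᵢ and Xⱼ, or there exist vertices u₁, u₂ ∈ Xᵢ and v ∈ Xⱼ with u₁v, u₂v ∈ E(G) such that u₁ and u₂ lie on different sides of the bipartition of G[Xᵢ]. -/
namespace SimpleGraph

variable {V : Type*} {G : SimpleGraph V} {A S : Set V}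

theorem colorable_two_induce_iff :
    (G.induce A).Colorable 2 ↔ ∃ c : V → Bool, ∀ x ∈ A, ∀ y ∈ A, G.Adj x y → c x ≠ c y := by
  classical
  constructor
  · intro h
    obtain ⟨c⟩ : Nonempty ((G.induce A).Coloring Bool) := ⟨h.toColoring (by simp)⟩
    refine ⟨fun x ↦ if hx : x ∈ A then c ⟨x, hx⟩ else true, fun x hx y hy hxy ↦ ?_⟩
    simpa [hx, hy] using c.valid (v := ⟨x, hx⟩) (w := ⟨y, hy⟩) hxy
  · rintro ⟨c, hc⟩
    have C : (G.induce A).Coloring Bool :=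
      Coloring.mk (fun x ↦ c x) fun {x y} hxy ↦ hc x x.2 y y.2 hxy
    simpa using C.colorable

theorem eq_iff_eq_of_connected_induce (hA : (G.induce A).Connected) {c d : V → Bool}
    (hc : ∀ x ∈ A, ∀ y ∈ A, G.Adj x y → c x ≠ c y)
    (hd : ∀ x ∈ A, ∀ y ∈ A, G.Adj x y → d x ≠ d y) {x y : V} (hx : x ∈ A) (hy : y ∈ A) :
    c x = d x ↔ c y = d y := by
  obtain ⟨p⟩ := hA.preconnected ⟨x, hx⟩ ⟨y, hy⟩
  suffices ∀ a b : A, (G.induce A).Walk a b → (c a = d a ↔ c b = d b) from this _ _ p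
  intro a b p
  induction p with
  | nil => rfl
  | @cons a b _ h _ ih =>
    rw [← ih]
    have h₁ := hc a a.2 b b.2 h
    have h₂ := hd a a.2 b b.2 h
    revert h₁ h₂
    cases c a <;> cases c b <;> cases d a <;> cases d b <;> simp

/-- A vertex adjacent to a connected bipartite set that cannot be added to it has neighbours on
both sides. -/
theorem exists_adj_adj_of_not_colorable_insert (hA : (G.induce A).Connected)
    (hA₂ : (G.induce A).Colorable 2) {v : V} (hv : v ∉ A)
    (h : ¬ (G.induce (insert v A)).Colorable 2) :
    ∃ u₁ ∈ A, ∃ u₂ ∈ A, G.Adj u₁ v ∧ G.Adj u₂ v ∧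
      ∀ c : V → Bool, (∀ x ∈ A, ∀ y ∈ A, G.Adj x y → c x ≠ c y) → c u₁ ≠ c u₂ := by
  classical
  obtain ⟨d, hd⟩ := colorable_two_induce_iff.1 hA₂
  have key : ∃ u₁ ∈ A, ∃ u₂ ∈ A, G.Adj u₁ v ∧ G.Adj u₂ v ∧ d u₁ ≠ d u₂ := by
    by_contra! hne
    obtain ⟨b, hb⟩ : ∃ b, ∀ u ∈ A, G.Adj u v → d u ≠ b := by
      by_cases hu : ∃ u ∈ A, G.Adj u v
      · obtain ⟨u, hu, huv⟩ := hu
        exact ⟨!d u, fun w hw hwv ↦ by simp [hne w hw u hu hwv huv]⟩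
      · push Not at hu
        exact ⟨true, fun u hu' huv ↦ absurd huv (hu u hu')⟩
    refine h (colorable_two_induce_iff.2 ⟨Function.update d v b, ?_⟩)
    have hA' : ∀ x ∈ A, Function.update d v b x = d x := fun x hx ↦
      Function.update_of_ne (ne_of_mem_of_not_mem hx hv) _ _
    rintro x (rfl | hx) y (rfl | hy) hxy
    · exact absurd hxy G.irrefl
    · rw [hA' y hy, Function.update_self]
      exact (hb y hy hxy.symm).symm
    · rw [hA' x hx, Function.update_self]
      exact hb x hx hxy
    · rw [hA' x hx, hA' y hy]
      exact hd x hx y hy hxy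
  obtain ⟨u₁, h₁, u₂, h₂, h₁v, h₂v, hne⟩ := key
  refine ⟨u₁, h₁, u₂, h₂, h₁v, h₂v, fun c hc heq ↦ hne ?_⟩
  have := eq_iff_eq_of_connected_induce hA hc hd h₁ h₂
  revert this
  rw [heq]
  cases c u₂ <;> cases d u₁ <;> cases d u₂ <;> simp

theorem exists_maximal_connected_colorable_two [Finite V] (hS : S.Nonempty) :
    ∃ A, Maximal (fun A ↦ A ⊆ S ∧ (G.induce A).Connected ∧ (G.induce A).Colorable 2) A := by
  obtain ⟨s, hs⟩ := hS
  refine (Set.toFinite {A | A ⊆ S ∧ (G.induce A).Connected ∧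
    (G.induce A).Colorable 2}).exists_maximal ⟨{s}, by simpa, ?_, ?_⟩
  · exact { preconnected := .of_subsingleton, nonempty := ⟨⟨s, rfl⟩⟩ }
  · refine colorable_two_induce_iff.2 ⟨fun _ ↦ true, ?_⟩
    rintro x rfl y rfl h
    exact absurd h G.irrefl

theorem exists_partition_connected_colorable_two [Finite V] (G : SimpleGraph V) (S : Set V) :
    ∃ (n : ℕ) (X : Fin n → Set V),
      (∀ i, X i ⊆ S) ∧
      (∀ v ∈ S, ∃! i, v ∈ X i) ∧
      (∀ i, (G.induce (X i)).Connected ∧ (G.induce (X i)).Colorable 2) ∧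
      (∀ i j : Fin n, i < j →
        (∀ u ∈ X i, ∀ v ∈ X j, ¬ G.Adj u v) ∨
        (∃ u₁ ∈ X i, ∃ u₂ ∈ X i, ∃ v ∈ X j, G.Adj u₁ v ∧ G.Adj u₂ v ∧
          ∀ c : V → Bool, (∀ x ∈ X i, ∀ y ∈ X i, G.Adj x y → c x ≠ c y) →
            c u₁ ≠ c u₂)) := by
  induction S using WellFoundedLT.induction with
  | ind S ih =>
  rcases S.eq_empty_or_nonempty with rfl | hS
  · exact ⟨0, Fin.elim0, by simp⟩
  obtain ⟨A, ⟨hAS, hA, hA₂⟩, hmax⟩ := exists_maximal_connected_colorable_two (G := G) hS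
  obtain ⟨a, ha⟩ : A.Nonempty := Set.nonempty_coe_sort.1 hA.nonempty
  obtain ⟨n, X, hXS, hX, hXc, hXe⟩ := ih (S \ A)
    ⟨Set.sdiff_subset, fun h ↦ (h (hAS ha)).2 ha⟩
  refine ⟨n + 1, Fin.cons A X, ?_, ?_, ?_, ?_⟩
  · exact Fin.cases hAS fun i ↦ (hXS i).trans Set.sdiff_subset
  · intro v hv
    by_cases hvA : v ∈ A
    · refine ⟨0, hvA, Fin.cases (fun _ ↦ rfl) fun i hi ↦ absurd hvA (hXS i hi).2⟩
    · obtain ⟨i, hi, hu⟩ := hX v ⟨hv, hvA⟩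
      exact ⟨i.succ, hi, Fin.cases (fun h ↦ absurd h hvA) fun j hj ↦ congrArg _ (hu j hj)⟩
  · exact Fin.cases ⟨hA, hA₂⟩ hXc
  · intro i j hij
    obtain ⟨j, rfl⟩ := Fin.exists_succ_eq.2 (Fin.ne_zero_of_lt hij)
    cases i using Fin.cases with
    | succ i => exact hXe i j (Fin.succ_lt_succ_iff.1 hij)
    | zero =>
      simp only [Fin.cons_zero, Fin.cons_succ]
      by_cases hadj : ∃ u ∈ A, ∃ v ∈ X j, G.Adj u v
      · right
        obtain ⟨u, hu, v, hv, huv⟩ := hadj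
        obtain ⟨hvS, hvA⟩ := hXS j hv
        have hconn : (G.induce (insert v A)).Connected :=
          connected_induce_union (s := {v}) .of_subsingleton hA.preconnected rfl hu huv.symm
        obtain ⟨u₁, h₁, u₂, h₂, h⟩ := exists_adj_adj_of_not_colorable_insert hA hA₂ hvA fun h ↦
          hvA (hmax ⟨Set.insert_subset hvS hAS, hconn, h⟩ (Set.subset_insert v A)
            (Set.mem_insert v A))
        exact ⟨u₁, h₁, u₂, h₂, v, hv, h⟩
      · left
        push Not at hadj
        exact hadj

end SimpleGraph

theorem stmt0 {V : Type*} [Fintype V] (G : SimpleGraph V) :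
    ∃ (n : ℕ) (X : Fin n → Set V),
      (∀ i, (X i).Nonempty) ∧
      (∀ v : V, ∃! i, v ∈ X i) ∧
      (∀ i, (G.induce (X i)).Connected ∧ (G.induce (X i)).Colorable 2) ∧
      (∀ i j : Fin n, i < j →
        (∀ u ∈ X i, ∀ v ∈ X j, ¬ G.Adj u v) ∨
        (∃ u₁ ∈ X i, ∃ u₂ ∈ X i, ∃ v ∈ X j, G.Adj u₁ v ∧ G.Adj u₂ v ∧
          ∀ c : V → Bool, (∀ x ∈ X i, ∀ y ∈ X i, G.Adj x y → c x ≠ c y) →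
            c u₁ ≠ c u₂)) := by
  obtain ⟨n, X, -, hX, hXc, hXe⟩ := G.exists_partition_connected_colorable_two Set.univ
  exact ⟨n, X, fun i ↦ Set.nonempty_coe_sort.1 (hXc i).1.nonempty,
    fun v ↦ hX v (Set.mem_univ v), hXc, hXe⟩
end

section
/- Let t ∈ ℕ and let f(t) be an integer such that every finite graph with no K_t-minor has chromatic number at most f(t). Then every finite graph with no odd K_t-minor has chromatic number at most 2·f(t). -/
/-- `G` contains `K t` as a minor: there are `t` pairwise vertex-disjoint subtrees of `G`
with at least one edge of `G` between any two of them. -/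
def HasKMinor {V : Type*} (G : SimpleGraph V) (t : ℕ) : Prop :=
  ∃ T : Fin t → G.Subgraph,
    (∀ i, (T i).coe.IsTree) ∧
    (Pairwise fun i j => Disjoint (T i).verts (T j).verts) ∧
    (∀ i j : Fin t, i ≠ j → ∃ u ∈ (T i).verts, ∃ v ∈ (T j).verts, G.Adj u v)

/-- `G` contains `K t` as an odd minor: there are `t` pairwise vertex-disjoint subtrees of `G`,
one connecting edge `e i j` of `G` between any two of them, and a `2`-coloring `c` of the
vertices making every tree edge bichromatic and every connecting edge monochromatic. -/
def HasOddKMinor {V : Type*} (G : SimpleGraph V) (t : ℕ) : Prop :=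
  ∃ (T : Fin t → G.Subgraph) (e : Fin t → Fin t → V × V) (c : V → Bool),
    (∀ i, (T i).coe.IsTree) ∧
    (Pairwise fun i j => Disjoint (T i).verts (T j).verts) ∧
    (∀ i j : Fin t, i ≠ j →
      (e i j).1 ∈ (T i).verts ∧ (e i j).2 ∈ (T j).verts ∧ G.Adj (e i j).1 (e i j).2) ∧
    (∀ i, ∀ u v : V, (T i).Adj u v → c u ≠ c v) ∧
    (∀ i j : Fin t, i ≠ j → c (e i j).1 = c (e i j).2)

namespace SimpleGraph

variable {V : Type*}

/-- The spanning subgraph of `G` formed by its edges that are bichromatic under `c`. -/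
def bichromatic (G : SimpleGraph V) (c : V → Bool) : SimpleGraph V where
  Adj u v := G.Adj u v ∧ c u ≠ c v
  symm := ⟨fun _ _ h => ⟨h.1.symm, h.2.symm⟩⟩
  loopless := ⟨fun _ h => h.2 rfl⟩

/-- The quotient graph whose vertices are the fibres of `p`, two of them being adjacent when
some edge of `G` joins them. -/
def fibreGraph {ι : Type*} (G : SimpleGraph V) (p : V → ι) : SimpleGraph (Set.range p) where
  Adj i j := i ≠ j ∧ ∃ u v, p u = i ∧ p v = j ∧ G.Adj u v
  symm := ⟨fun _ _ ⟨hne, u, v, hu, hv, huv⟩ => ⟨hne.symm, v, u, hv, hu, huv.symm⟩⟩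
  loopless := ⟨fun _ h => h.1 rfl⟩

theorem Connected.exists_isTree_coe_of_induce {G : SimpleGraph V} {c : V → Bool} {B : Set V}
    (hB : ((G.bichromatic c).induce B).Connected) :
    ∃ T : G.Subgraph, T.verts = B ∧ T.coe.IsTree ∧ ∀ u v, T.Adj u v → c u ≠ c v := by
  obtain ⟨F, hF, hFT⟩ := hB.exists_isTree_le
  refine ⟨{ verts := B
            Adj := fun u v => ∃ (hu : u ∈ B) (hv : v ∈ B), F.Adj ⟨u, hu⟩ ⟨v, hv⟩
            adj_sub := fun ⟨_, _, h⟩ => (hF h).1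
            edge_vert := fun ⟨hu, _, _⟩ => hu
            symm := ⟨fun _ _ ⟨hu, hv, h⟩ => ⟨hv, hu, h.symm⟩⟩ }, rfl, ?_, ?_⟩
  · convert hFT using 1
    ext u v
    simp
  · rintro u v ⟨hu, hv, h⟩
    exact (hF h).2

theorem hasOddKMinor_of_connected {G : SimpleGraph V} {t : ℕ} (B : Fin t → Set V)
    (c : V → Bool) (hconn : ∀ i, ((G.bichromatic c).induce (B i)).Connected)
    (hdisj : Pairwise fun i j => Disjoint (B i) (B j))
    (hedge : ∀ i j, i ≠ j → ∃ u ∈ B i, ∃ v ∈ B j, G.Adj u v ∧ c u = c v) :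
    HasOddKMinor G t := by
  choose T hTB hT hc using fun i => (hconn i).exists_isTree_coe_of_induce
  have hedge' : ∀ i j, ∃ e : V × V, i ≠ j →
      e.1 ∈ B i ∧ e.2 ∈ B j ∧ G.Adj e.1 e.2 ∧ c e.1 = c e.2 := by
    intro i j
    by_cases hij : i = j
    · obtain ⟨x⟩ := (hconn i).nonempty
      exact ⟨(x, x), fun h => absurd hij h⟩
    · obtain ⟨u, hu, v, hv, h⟩ := hedge i j hij
      exact ⟨(u, v), fun _ => ⟨hu, hv, h⟩⟩
  choose e he using hedge'
  refine ⟨T, e, c, hT, fun i j hij => ?_, fun i j hij => ?_, hc, fun i j hij => (he i j hij).2.2.2⟩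
  · simpa only [hTB] using hdisj hij
  · rw [hTB, hTB]
    exact ⟨(he i j hij).1, (he i j hij).2.1, (he i j hij).2.2.1⟩

/-- A maximal connected induced bipartite subgraph inside `R`: every outside vertex of `R` with
a neighbour in it has neighbours in both colour classes. -/
theorem exists_maximal_connected_bipartite [Finite V] (G : SimpleGraph V) {R : Set V}
    (hR : R.Nonempty) :
    ∃ (X : Set V) (c : V → Bool), X ⊆ R ∧ (G.induce X).Connected ∧
      (∀ u ∈ X, ∀ v ∈ X, G.Adj u v → c u ≠ c v) ∧
      ∀ u ∈ X, ∀ v ∈ R \ X, G.Adj u v → ∀ b, ∃ w ∈ X, G.Adj w v ∧ c w = b := by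
  classical
  let P : Set (Set V) := {X | X ⊆ R ∧ (G.induce X).Connected ∧
    ∃ c : V → Bool, ∀ u ∈ X, ∀ v ∈ X, G.Adj u v → c u ≠ c v}
  obtain ⟨x, hx⟩ := hR
  have hne : P.Nonempty := by
    refine ⟨{x}, by simpa using hx, ?_, fun _ => true, ?_⟩
    · have : Nonempty ({x} : Set V) := ⟨⟨x, rfl⟩⟩
      exact ⟨Preconnected.of_subsingleton⟩
    · rintro u rfl v rfl h
      exact absurd h (G.irrefl)
  obtain ⟨X, hX⟩ := P.toFinite.exists_maximal hne
  obtain ⟨hXR, hXc, c, hc⟩ := hX.prop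
  refine ⟨X, c, hXR, hXc, hc, fun u hu v hv huv b => ?_⟩
  by_contra! hno
  have hins : X ∪ {v} ∈ P := by
    refine ⟨Set.union_subset hXR (by simpa using hv.1), ?_, Function.update c v b, ?_⟩
    · have : Nonempty ({v} : Set V) := ⟨⟨v, rfl⟩⟩
      have hvc : (G.induce {v}).Connected := ⟨Preconnected.of_subsingleton⟩
      exact connected_induce_union hXc.preconnected hvc.preconnected hu rfl huv
    · have hXv : ∀ w ∈ X, w ≠ v := fun w hw h => hv.2 (h ▸ hw)
      rintro y (hy | rfl) z (hz | rfl) hyz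
      · simpa [hXv y hy, hXv z hz] using hc y hy z hz hyz
      · simpa [hXv y hy] using hno y hy hyz
      · simpa [hXv z hz] using (hno z hz hyz.symm).symm
      · exact absurd hyz G.irrefl
  exact hv.2 (hX.le_of_ge hins Set.subset_union_left (Or.inr rfl))

/-- Every set of vertices splits into connected bipartite pieces such that each vertex with a
neighbour in an earlier piece has neighbours in both colour classes of that piece. -/
theorem exists_connected_bipartite_partition [Finite V] (G : SimpleGraph V) (R : Set V) :
    ∃ (p : V → ℕ) (c : V → Bool),
      (∀ i, (G.induce {v ∈ R | p v = i}).Preconnected) ∧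
      (∀ u ∈ R, ∀ v ∈ R, G.Adj u v → p u = p v → c u ≠ c v) ∧
      ∀ u ∈ R, ∀ v ∈ R, G.Adj u v → p u < p v →
        ∀ b, ∃ w ∈ R, p w = p u ∧ G.Adj w v ∧ c w = b := by
  classical
  induction R using WellFoundedLT.induction with
  | ind R ih =>
  rcases R.eq_empty_or_nonempty with rfl | hR
  · exact ⟨fun _ => 0, fun _ => true, fun i x => absurd x.2.1 (by simp), by simp, by simp⟩
  obtain ⟨X, c, hXR, hXc, hc, hmax⟩ := G.exists_maximal_connected_bipartite hR
  obtain ⟨⟨x, hx⟩⟩ := hXc.nonempty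
  obtain ⟨p, d, hp, hd, hpd⟩ := ih (R \ X)
    ⟨Set.sdiff_subset, fun h => (h (hXR hx)).2 hx⟩
  refine ⟨fun v => if v ∈ X then 0 else p v + 1, fun v => if v ∈ X then c v else d v,
    ?_, ?_, ?_⟩
  · rintro (_ | i)
    · convert hXc.preconnected using 2 <;> grind
    · convert hp i using 2 <;> grind
  · intro u hu v hv huv hpuv
    by_cases huX : u ∈ X <;> by_cases hvX : v ∈ X <;>
      simp only [huX, hvX, if_true, if_false] at hpuv ⊢
    · exact hc u huX v hvX huv
    · omega
    · omega
    · exact hd u ⟨hu, huX⟩ v ⟨hv, hvX⟩ huv (by omega)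
  · intro u hu v hv huv hpuv b
    by_cases huX : u ∈ X <;> by_cases hvX : v ∈ X <;>
      simp only [huX, hvX, if_true, if_false] at hpuv ⊢
    · omega
    · obtain ⟨w, hw, hwv, hwb⟩ := hmax u huX v ⟨hv, hvX⟩ huv b
      exact ⟨w, hXR hw, by simp [hw], hwv, by simpa [hw] using hwb⟩
    · omega
    · obtain ⟨w, hw, hwp, hwv, hwb⟩ := hpd u ⟨hu, huX⟩ v ⟨hv, hvX⟩ huv (by omega) b
      exact ⟨w, hw.1, by simp [hw.2, hwp], hwv, by simpa [hw.2] using hwb⟩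

/-- A colouring that is proper on every fibre of `p` can be flipped on whole fibres so that the
bichromatic graph becomes connected over a connected set of fibres. -/
theorem exists_flip_connected {ι : Type*} {G : SimpleGraph V} {p : V → ι} {c : V → Bool}
    [Finite V] (hp : ∀ i, (G.induce {v | p v = i}).Preconnected)
    (hc : ∀ u v, G.Adj u v → p u = p v → c u ≠ c v) {T : Set (Set.range p)}
    (hT : ((G.fibreGraph p).induce T).Connected) :
    ∃ σ : ι → Bool, ((G.bichromatic fun v => c v ^^ σ (p v)).induce
      {v | Set.rangeFactorization p v ∈ T}).Connected := by
  classical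
  have hfib : ∀ (σ : ι → Bool) (i : Set.range p), ((G.bichromatic fun v => c v ^^ σ (p v)).induce
      {v | Set.rangeFactorization p v = i}).Connected := by
    rintro σ ⟨_, x, rfl⟩
    have : Nonempty {v | Set.rangeFactorization p v = ⟨p x, x, rfl⟩} := ⟨⟨x, rfl⟩⟩
    have hpx : (G.induce {v | Set.rangeFactorization p v = ⟨p x, x, rfl⟩}).Preconnected := by
      convert hp (p x) using 2
      all_goals ext v; simp [Set.rangeFactorization, Subtype.ext_iff]
    refine ⟨hpx.mono ?_⟩
    rintro ⟨u, hu⟩ ⟨v, hv⟩ huv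
    have hpu : p u = p x := congrArg Subtype.val hu
    have hpv : p v = p x := congrArg Subtype.val hv
    refine ⟨huv, ?_⟩
    have := hc u v huv (hpu.trans hpv.symm)
    simpa [hpu, hpv] using this
  let P : Set (Set (Set.range p)) := {S | S ⊆ T ∧ S.Nonempty ∧
    ∃ σ : ι → Bool, ((G.bichromatic fun v => c v ^^ σ (p v)).induce
      {v | Set.rangeFactorization p v ∈ S}).Connected}
  obtain ⟨⟨i, hi⟩⟩ := hT.nonempty
  have hne : P.Nonempty :=
    ⟨{i}, by simpa using hi, Set.singleton_nonempty i, fun _ => false, hfib (fun _ => false) i⟩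
  obtain ⟨S, hS⟩ := P.toFinite.exists_maximal hne
  obtain ⟨hST, ⟨s, hs⟩, σ, hσ⟩ := hS.prop
  suffices S = T by exact ⟨σ, this ▸ hσ⟩
  refine hST.antisymm fun r hr => ?_
  by_contra hrS
  obtain ⟨walk⟩ := hT.preconnected ⟨s, hST hs⟩ ⟨r, hr⟩
  obtain ⟨⟨⟨⟨j, hj⟩, ⟨k, hk⟩⟩, hjk⟩, hd⟩ :=
    walk.exists_boundary_dart (Subtype.val ⁻¹' S) hs hrS
  have hjS : j ∈ S := hd.2.1
  have hkS : k ∉ S := hd.2.2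
  obtain ⟨-, u, v, hu, hv, huv⟩ := hjk
  change p u = j at hu
  change p v = k at hv
  let τ : ι → Bool := Function.update σ k (!(c u ^^ σ j ^^ c v))
  have hτ : ∀ l ∈ S, τ l = σ l := fun l hl =>
    Function.update_of_ne (fun h => hkS ((Subtype.ext h : l = k) ▸ hl)) _ _
  have hSτ : ((G.bichromatic fun v => c v ^^ τ (p v)).induce
      {v | Set.rangeFactorization p v ∈ S}).Connected := by
    refine hσ.mono ?_
    rintro ⟨y, hy⟩ ⟨z, hz⟩ hyz
    refine ⟨hyz.1, ?_⟩
    have h1 : τ (p y) = σ (p y) := hτ _ hy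
    have h2 : τ (p z) = σ (p z) := hτ _ hz
    simpa [h1, h2] using hyz.2
  have hins : S ∪ {k} ∈ P := by
    refine ⟨Set.union_subset hST (by simpa using hk), ⟨s, Or.inl hs⟩, τ, ?_⟩
    refine connected_induce_union (v := u) (w := v) hSτ.preconnected
      (hfib τ k).preconnected ?_ ?_ ⟨huv, ?_⟩
    · have huj : Set.rangeFactorization p u = j := Subtype.ext hu
      change Set.rangeFactorization p u ∈ S
      rwa [huj]
    · exact Subtype.ext hv
    · have h1 : τ (p u) = σ j := hu ▸ hτ j hjS
      have h2 : τ (p v) = !(c u ^^ σ j ^^ c v) := by rw [hv]; exact Function.update_self ..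
      simp only [h1, h2]
      cases c u <;> cases c v <;> cases σ j <;> decide
  exact hkS (hS.le_of_ge hins Set.subset_union_left (Or.inr rfl))

theorem hasOddKMinor_of_fibreGraph [Finite V] {G : SimpleGraph V} {p : V → ℕ} {c : V → Bool}
    (hp : ∀ i, (G.induce {v | p v = i}).Preconnected)
    (hc : ∀ u v, G.Adj u v → p u = p v → c u ≠ c v)
    (hpc : ∀ u v, G.Adj u v → p u < p v → ∀ b, ∃ w, p w = p u ∧ G.Adj w v ∧ c w = b)
    {t : ℕ} (ht : HasKMinor (G.fibreGraph p) t) : HasOddKMinor G t := by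
  classical
  obtain ⟨T, hT, hdisj, hedge⟩ := ht
  have hconn : ∀ i, ((G.fibreGraph p).induce (T i).verts).Connected := fun i =>
    (hT i).1.mono fun _ _ h => (T i).adj_sub h
  choose σ hσ using fun i => exists_flip_connected hp hc (hconn i)
  have hτ : ∃ τ : ℕ → Bool, ∀ i, ∀ k ∈ (T i).verts, τ k = σ i k := by
    refine ⟨fun n => if h : ∃ i, ∃ k ∈ (T i).verts, k.val = n then σ h.choose n else false, ?_⟩
    intro i k hk
    have h : ∃ i, ∃ l ∈ (T i).verts, l.val = k.val := ⟨i, k, hk, rfl⟩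
    obtain ⟨l, hl, hlk⟩ := h.choose_spec
    have hi : h.choose = i := by
      by_contra hne
      exact Set.disjoint_left.1 (hdisj hne) hl (Subtype.ext hlk ▸ hk)
    simp only [dif_pos h, hi]
  obtain ⟨τ, hτ⟩ := hτ
  refine hasOddKMinor_of_connected (fun i => {v | Set.rangeFactorization p v ∈ (T i).verts})
    (fun v => c v ^^ τ (p v)) (fun i => (hσ i).mono ?_) (fun i j hij => ?_) fun i j hij => ?_
  · rintro ⟨y, hy⟩ ⟨z, hz⟩ hyz
    refine ⟨hyz.1, ?_⟩
    have h1 : τ (p y) = σ i (p y) := hτ i _ hy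
    have h2 : τ (p z) = σ i (p z) := hτ i _ hz
    simpa [h1, h2] using hyz.2
  · exact (hdisj hij).preimage _
  · obtain ⟨a, ha, b, hb, hab, u, v, hu, hv, huv⟩ := hedge i j hij
    have mem : ∀ {w k l}, k ∈ (T l).verts → p w = k.val →
        Set.rangeFactorization p w ∈ (T l).verts := fun {w k l} hk hw =>
      (Subtype.ext hw : Set.rangeFactorization p w = k) ▸ hk
    rcases lt_trichotomy (p u) (p v) with hlt | heq | hlt
    · obtain ⟨w, hw, hwv, hwc⟩ := hpc u v huv hlt (c v ^^ τ (p v) ^^ τ (p u))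
      exact ⟨w, mem ha (hw.trans hu), v, mem hb hv, hwv, by simp [hw, hwc]⟩
    · exact absurd (Subtype.ext (hu.symm.trans (heq.trans hv))) hab
    · obtain ⟨w, hw, hwu, hwc⟩ := hpc v u huv.symm hlt (c u ^^ τ (p u) ^^ τ (p v))
      exact ⟨u, mem ha hu, w, mem hb (hw.trans hv), hwu.symm, by simp [hw, hwc]⟩

theorem Colorable.of_fibreGraph {ι : Type*} {G : SimpleGraph V} {p : V → ι} {c : V → Bool}
    (hc : ∀ u v, G.Adj u v → p u = p v → c u ≠ c v) {n : ℕ}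
    (hn : (G.fibreGraph p).Colorable n) : G.Colorable (2 * n) := by
  obtain ⟨C⟩ := hn
  let D : G.Coloring (Bool × Fin n) :=
    Coloring.mk (fun v => (c v, C (Set.rangeFactorization p v))) fun {u v} huv heq => by
      obtain ⟨h1, h2⟩ := Prod.mk.inj heq
      by_cases hp : p u = p v
      · exact hc u v huv hp h1
      · exact C.valid (v := Set.rangeFactorization p u) (w := Set.rangeFactorization p v)
          ⟨fun h => hp (congrArg Subtype.val h), u, v, rfl, rfl, huv⟩ h2
  simpa using D.colorable

end SimpleGraph

theorem stmt5 (t f : ℕ)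
    (h : ∀ (V : Type) [Fintype V] (G : SimpleGraph V),
      ¬ HasKMinor G t → G.chromaticNumber ≤ (f : ℕ∞)) :
    ∀ (V : Type) [Fintype V] (G : SimpleGraph V),
      ¬ HasOddKMinor G t → G.chromaticNumber ≤ (2 * f : ℕ∞) := by
  classical
  intro V _ G hG
  obtain ⟨p, c, hp, hc, hpc⟩ := G.exists_connected_bipartite_partition Set.univ
  simp only [Set.mem_univ, true_and, forall_const] at hc hpc
  have hH := h _ (G.fibreGraph p) fun ht =>
    hG (SimpleGraph.hasOddKMinor_of_fibreGraph
      (fun i => by have := hp i; rwa [Set.sep_univ] at this) hc hpc ht)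
  have hcol := SimpleGraph.Colorable.of_fibreGraph hc
    (SimpleGraph.chromaticNumber_le_iff_colorable.1 hH)
  exact_mod_cast hcol.chromaticNumber_le
end
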